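/- arXiv:1308.1718 — 5 statements merged into one kernel-verified Lean document; each statement's English description precedes it below -/
import Mathlib

section
/- Consider the algebra P of polynomial functions on SL(3,ℂ), i.e., the ℂ-subalgebra of complex-valued functions on SL(3,ℂ) generated by the nine matrix-entry functions X ↦ X_{ij}. The group SL(3,ℂ) acts on itself by conjugation, and hence on functions by (g·f)(X) = f(g⁻¹ X g). Then the subalgebra of conjugation-invariant elements of P is generated, as a ℂ-algebra, by the two functions X ↦ tr(X) and X ↦ tr(X⁻¹). -/
/-!
The inclusion `⊇` is elementary: the trace of the inverse is the trace of the adjugate,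
hence polynomial, and both traces are conjugation invariant. For `⊆`,
let `f` be an invariant polynomial function. Restricted to the companion matrices of
`x³ - a x² + b x - 1` it is a polynomial `p (a, b)`. If the first basis vector `e` is cyclic for
`X`, then `X` is conjugate to its companion matrix in `SL(3,ℂ)`, so
`f X = p (tr X, tr X⁻¹)` (`eq_companion_of_cyclic`). Cyclicity of `e` is the nonvanishing of
`det (e, X e, X² e)`, and a polynomial function on `SL(3,ℂ)` that vanishes wherever this
determinant does not is zero (`eq_zero_of_eq_zero_on_cyclic`): since `SL(3,ℂ)` is generated by
transvections, any two of its points are joined by a polynomial curve (`exists_curve`), and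
pulling back along a curve from an arbitrary point to a point with `e` cyclic reduces the claim
to `ℂ[t]` being a domain.
-/

open Matrix

/-- The algebra of polynomial functions on `SL(3,ℂ)`: the ℂ-subalgebra of
complex-valued functions on `SL(3,ℂ)` generated by the matrix-entry functions. -/
noncomputable def polySL3 : Subalgebra ℂ (Matrix.SpecialLinearGroup (Fin 3) ℂ → ℂ) :=
  Algebra.adjoin ℂ
    {f | ∃ i j : Fin 3, f = fun X : Matrix.SpecialLinearGroup (Fin 3) ℂ => X.val i j}

namespace SL3Invariants

open Polynomial SpecialLinearGroup

local notation "SL3" => Matrix.SpecialLinearGroup (Fin 3)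

/-- A polynomial function on `SL(3,ℂ)` can be evaluated at a matrix over any commutative
`ℂ`-algebra, compatibly with specialisation to `ℂ`. -/
lemma exists_eval {f : SL3 ℂ → ℂ} (hf : f ∈ polySL3) {R : Type*} [CommRing R] [Algebra ℂ R]
    (M : SL3 R) : ∃ r : R, ∀ φ : R →ₐ[ℂ] ℂ, f (map (φ : R →+* ℂ) M) = φ r := by
  induction hf using Algebra.adjoin_induction with
  | mem f hf =>
    obtain ⟨i, j, rfl⟩ := hf
    exact ⟨M.val i j, fun φ => by simp⟩
  | algebraMap c => exact ⟨algebraMap ℂ R c, fun φ => by simp⟩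
  | add f g _ _ hf hg =>
    obtain ⟨r, hr⟩ := hf
    obtain ⟨s, hs⟩ := hg
    exact ⟨r + s, fun φ => by simp [hr, hs]⟩
  | mul f g _ _ hf hg =>
    obtain ⟨r, hr⟩ := hf
    obtain ⟨s, hs⟩ := hg
    exact ⟨r * s, fun φ => by simp [hr, hs]⟩

/-! ### Polynomial curves in `SL(3,ℂ)` -/

/-- The value at `a` of a polynomial curve in `SL(3,ℂ)`, that is, of a matrix in `SL(3,ℂ[t])`. -/
noncomputable def curveEval (a : ℂ) : SL3 ℂ[X] →* SL3 ℂ := map (evalRingHom a)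

lemma curveEval_apply (a : ℂ) (M : SL3 ℂ[X]) (i j : Fin 3) :
    (curveEval a M).val i j = (M.val i j).eval a := rfl

/-- The factorisation of `diag (c, c⁻¹)` in `SL₂` into transvections, placed in the coordinates
`i` and `j`. -/
lemma diag2n_decompose {i j : Fin 3} (hij : i ≠ j) {c : ℂ} (hc : c ≠ 0) :
    diag2n hij c hc = transvection hij c * transvection hij.symm (-c⁻¹) * transvection hij c *
      transvection hij (-1) * transvection hij.symm 1 * transvection hij (-1) := by
  apply Subtype.ext
  simp only [Matrix.SpecialLinearGroup.coe_mul, diag2n_coe, transvection_coe]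
  ext k l
  fin_cases i <;> fin_cases j <;> (try exact absurd rfl hij) <;>
  fin_cases k <;> fin_cases l <;>
  simp [mul_apply, Fin.sum_univ_three, single_apply, one_apply, hc]

/-- The curves starting at `1` are closed under products, so it suffices to join `1` to each
transvection, which is done by scaling its off-diagonal entry. -/
lemma exists_curve_one (g : SL3 ℂ) : ∃ M : SL3 ℂ[X], curveEval 0 M = 1 ∧ curveEval 1 M = g := by
  have htr : ∀ (i j : Fin 3) (hij : i ≠ j) (a : ℂ),
      ∃ M : SL3 ℂ[X], curveEval 0 M = 1 ∧ curveEval 1 M = transvection hij a := by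
    intro i j hij a
    refine ⟨transvection hij (C a * X), ?_, ?_⟩ <;>
    · ext k l
      simp only [curveEval_apply, transvection_coe, Matrix.SpecialLinearGroup.coe_one,
        Matrix.add_apply, one_apply, single_apply]
      split_ifs <;> simp
  have hmul : ∀ A B : SL3 ℂ,
      (∃ M : SL3 ℂ[X], curveEval 0 M = 1 ∧ curveEval 1 M = A) →
      (∃ M : SL3 ℂ[X], curveEval 0 M = 1 ∧ curveEval 1 M = B) →
      ∃ M : SL3 ℂ[X], curveEval 0 M = 1 ∧ curveEval 1 M = A * B := by
    rintro _ _ ⟨M, hM, rfl⟩ ⟨N, hN, rfl⟩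
    exact ⟨M * N, by simp [hM, hN], by simp⟩
  refine diagonal_transvection_induction' _ g (fun i j hij c hc => ?_) htr hmul
  rw [diag2n_decompose hij hc]
  exact hmul _ _ (hmul _ _ (hmul _ _ (hmul _ _ (hmul _ _ (htr ..) (htr ..)) (htr ..)) (htr ..))
    (htr ..)) (htr ..)

lemma exists_curve (A B : SL3 ℂ) : ∃ M : SL3 ℂ[X], curveEval 0 M = A ∧ curveEval 1 M = B := by
  obtain ⟨M, hM, hM'⟩ := exists_curve_one A
  obtain ⟨N, hN, hN'⟩ := exists_curve_one (A⁻¹ * B)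
  refine ⟨map C A * N, ?_, ?_⟩
  · have : curveEval 0 (map C A) = A := by ext; exact eval_C
    simp [hN, this]
  · have : curveEval 1 (map C A) = A := by ext; exact eval_C
    simp [hN', this]

/-! ### Companion matrices and cyclic vectors -/

/-- The companion matrix of `x³ - a x² + b x - 1`. -/
def companion {R : Type*} [CommRing R] (a b : R) : SL3 R :=
  ⟨!![0, 0, 1; 1, 0, -b; 0, 1, a], by simp [det_fin_three]⟩

/-- The matrix with columns `e`, `M e`, `M² e`, where `e` is the first basis vector. Its
determinant is nonzero exactly when `e` is a cyclic vector of `M`. -/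
def krylov {R : Type*} [CommRing R] (M : Matrix (Fin 3) (Fin 3) R) : Matrix (Fin 3) (Fin 3) R :=
  of fun i j => (M ^ (j : ℕ)) i 0

lemma map_det_krylov {R S : Type*} [CommRing R] [CommRing S] (φ : R →+* S) (M : SL3 R) :
    (krylov (map φ M).val).det = φ (krylov M.val).det := by
  rw [RingHom.map_det]
  congr 1
  ext i j
  change ((φ.mapMatrix M.val) ^ (j : ℕ)) i 0 = φ ((M.val ^ (j : ℕ)) i 0)
  rw [← map_pow]
  rfl

/-- Cayley–Hamilton in `SL(3,ℂ)`. -/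
lemma pow_three_eq (M : SL3 ℂ) :
    M.val ^ 3 = trace M.val • M.val ^ 2 - trace (M⁻¹).val • M.val + 1 := by
  have h : M.val ^ 3 =
      trace M.val • M.val ^ 2 - trace M.val.adjugate • M.val + M.val.det • (1 : Matrix _ _ ℂ) := by
    rw [det_fin_three, trace_fin_three, trace_fin_three, adjugate_fin_three]
    ext i j
    fin_cases i <;> fin_cases j <;>
    simp [pow_succ, mul_apply, Fin.sum_univ_three, Matrix.smul_apply,
      -SpecialLinearGroup.det_coe] <;> ring
  rwa [M.2, one_smul] at h

/-- In the basis `e`, `M e`, `M² e` the matrix `M` becomes its companion matrix. -/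
lemma mul_krylov (M : SL3 ℂ) :
    M.val * krylov M.val =
      krylov M.val * (companion (trace M.val) (trace (M⁻¹).val)).val := by
  -- `M` shifts the columns `Mᵏ e`, so only the last column needs Cayley–Hamilton.
  have key : ∀ i (k : Fin 3), (M.val * krylov M.val) i k = (M.val ^ (k + 1 : ℕ)) i 0 := by
    intro i k
    rw [pow_succ']
    rfl
  ext i k
  rw [key]
  fin_cases k
  · simp [krylov, companion, mul_apply, Fin.sum_univ_three]
  · simp [krylov, companion, mul_apply, Fin.sum_univ_three]
  · simp only [Fin.reduceFinMk, Nat.reduceAdd, pow_three_eq]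
    simp [krylov, companion, mul_apply (M := of _), Fin.sum_univ_three]
    ring

/-- Invariance under `SL(3,ℂ)` is invariance under conjugation by any invertible matrix, because
such a matrix can be rescaled to determinant one. -/
lemma eq_of_conj {f : SL3 ℂ → ℂ} (hf : ∀ g X : SL3 ℂ, f (g⁻¹ * X * g) = f X)
    {A B : SL3 ℂ} {P : Matrix (Fin 3) (Fin 3) ℂ} (hP : P.det ≠ 0)
    (h : A.val * P = P * B.val) : f A = f B := by
  obtain ⟨u, hu⟩ := IsAlgClosed.exists_pow_nat_eq (P.det)⁻¹ (n := 3) (by norm_num)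
  let g : SL3 ℂ := ⟨u • P, by rw [Matrix.det_smul, Fintype.card_fin, hu, inv_mul_cancel₀ hP]⟩
  have hg : A * g = g * B := Subtype.ext <| by
    change A.val * (u • P) = (u • P) * B.val
    rw [Matrix.mul_smul, h, Matrix.smul_mul]
  rw [← hf g A, mul_assoc, hg, inv_mul_cancel_left]

lemma eq_companion_of_cyclic {f : SL3 ℂ → ℂ} (hf : ∀ g X : SL3 ℂ, f (g⁻¹ * X * g) = f X)
    {A : SL3 ℂ} (hA : (krylov A.val).det ≠ 0) :
    f A = f (companion (trace A.val) (trace (A⁻¹).val)) :=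
  eq_of_conj hf hA (mul_krylov A)

/-- Density of the locus where the first basis vector is cyclic: on a curve from `A` to a point of
this locus, the product of `h` with the determinant vanishes identically, and the second factor
is a nonzero polynomial. -/
lemma eq_zero_of_eq_zero_on_cyclic {h : SL3 ℂ → ℂ} (hh : h ∈ polySL3)
    (h0 : ∀ A : SL3 ℂ, (krylov A.val).det ≠ 0 → h A = 0) (A : SL3 ℂ) : h A = 0 := by
  -- The first basis vector is cyclic for every companion matrix; `companion 0 0` is one choice.
  obtain ⟨M, hM0, hM1⟩ := exists_curve A (companion 0 0)
  obtain ⟨r, hr⟩ := exists_eval hh M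
  have hr' : ∀ a, h (curveEval a M) = r.eval a := fun a => hr (aeval a)
  have hc : ∀ a, (krylov (curveEval a M).val).det = (krylov M.val).det.eval a := fun a =>
    map_det_krylov (evalRingHom a) M
  have hprod : r * (krylov M.val).det = 0 := by
    refine Polynomial.funext fun a => ?_
    rw [eval_mul, ← hr', ← hc, eval_zero, mul_eq_zero]
    by_contra! hne
    exact hne.1 (h0 _ hne.2)
  have hne : (krylov M.val).det ≠ 0 := by
    intro h'
    have := hc 1
    rw [h', hM1] at this
    simp [krylov, companion, det_fin_three, pow_succ, mul_apply, Fin.sum_univ_three] at this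
  rw [← hM0, hr', (mul_eq_zero.mp hprod).resolve_right hne, eval_zero]

/-! ### The two generators -/

lemma entry_mem (i j : Fin 3) : (fun A : SL3 ℂ => A.val i j) ∈ polySL3 :=
  Algebra.subset_adjoin ⟨i, j, rfl⟩

lemma trace_mem : (fun A : SL3 ℂ => trace A.val) ∈ polySL3 := by
  simp only [trace_fin_three]
  exact add_mem (add_mem (entry_mem 0 0) (entry_mem 1 1)) (entry_mem 2 2)

lemma trace_inv_mem : (fun A : SL3 ℂ => trace (A⁻¹).val) ∈ polySL3 := by
  have h : ∀ i j k l : Fin 3, (fun A : SL3 ℂ => A.val i j * A.val k l) ∈ polySL3 :=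
    fun i j k l => mul_mem (entry_mem i j) (entry_mem k l)
  have e : (fun A : SL3 ℂ => trace (A⁻¹).val) = fun A : SL3 ℂ =>
      (A.val 1 1 * A.val 2 2 - A.val 1 2 * A.val 2 1) +
      (A.val 0 0 * A.val 2 2 - A.val 0 2 * A.val 2 0) +
      (A.val 0 0 * A.val 1 1 - A.val 0 1 * A.val 1 0) := by
    funext A
    simp [trace_fin_three, adjugate_fin_three]
  rw [e]
  exact add_mem (add_mem (sub_mem (h 1 1 2 2) (h 1 2 2 1)) (sub_mem (h 0 0 2 2) (h 0 2 2 0)))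
    (sub_mem (h 0 0 1 1) (h 0 1 1 0))

lemma trace_conj_SL3 (g A : SL3 ℂ) : trace (g⁻¹ * A * g).val = trace A.val := by
  rw [Matrix.SpecialLinearGroup.coe_mul, trace_mul_comm,
    ← Matrix.SpecialLinearGroup.coe_mul, mul_inv_cancel_left]

end SL3Invariants

open SL3Invariants

theorem conjugation_invariants_of_SL3 :
    {f : Matrix.SpecialLinearGroup (Fin 3) ℂ → ℂ |
        f ∈ polySL3 ∧
        ∀ (g X : Matrix.SpecialLinearGroup (Fin 3) ℂ), f (g⁻¹ * X * g) = f X} =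
      (Algebra.adjoin ℂ
        ({fun X : Matrix.SpecialLinearGroup (Fin 3) ℂ => Matrix.trace X.val,
          fun X : Matrix.SpecialLinearGroup (Fin 3) ℂ => Matrix.trace (X⁻¹).val} :
          Set (Matrix.SpecialLinearGroup (Fin 3) ℂ → ℂ)) : Set _) := by
  let G : Fin 2 → Matrix.SpecialLinearGroup (Fin 3) ℂ → ℂ :=
    ![fun A => trace A.val, fun A => trace (A⁻¹).val]
  have hG : Algebra.adjoin ℂ (Set.range G) ≤ polySL3 := by
    refine Algebra.adjoin_le ?_
    rintro _ ⟨i, rfl⟩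
    fin_cases i
    exacts [trace_mem, trace_inv_mem]
  have hrange : ({fun A => trace A.val, fun A => trace (A⁻¹).val} :
      Set (Matrix.SpecialLinearGroup (Fin 3) ℂ → ℂ)) = Set.range G := by
    simp [G, Matrix.range_cons, Set.pair_comm]
  rw [hrange]
  ext f
  constructor
  · rintro ⟨hf, hinv⟩
    -- Evaluating `f` at the companion matrix with indeterminate coefficients gives `p`.
    obtain ⟨p, hp⟩ := exists_eval hf
      (companion (MvPolynomial.X 0 : MvPolynomial (Fin 2) ℂ) (MvPolynomial.X 1))
    have hp' : ∀ a b, f (companion a b) = MvPolynomial.aeval ![a, b] p := by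
      intro a b
      rw [← hp]
      congr 1
      ext i j
      change (companion a b).val i j = MvPolynomial.aeval ![a, b] ((companion
        (MvPolynomial.X 0 : MvPolynomial (Fin 2) ℂ) (MvPolynomial.X 1)).val i j)
      fin_cases i <;> fin_cases j <;> simp [companion]
    have hGp : MvPolynomial.aeval G p ∈ Algebra.adjoin ℂ (Set.range G) := by
      rw [Algebra.adjoin_range_eq_range_aeval]
      exact ⟨p, rfl⟩
    have hGp' : ∀ A, MvPolynomial.aeval G p A =
        MvPolynomial.aeval ![trace A.val, trace (A⁻¹).val] p := by
      intro A
      have := MvPolynomial.comp_aeval_apply G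
        (Pi.evalAlgHom ℂ (fun _ : Matrix.SpecialLinearGroup (Fin 3) ℂ => ℂ) A) p
      refine this.trans ?_
      congr 2
      funext i
      fin_cases i <;> rfl
    have hfG : f = MvPolynomial.aeval G p := by
      funext A
      refine sub_eq_zero.mp (eq_zero_of_eq_zero_on_cyclic (sub_mem hf (hG hGp)) ?_ A)
      intro B hB
      rw [Pi.sub_apply, hGp', eq_companion_of_cyclic hinv hB, hp', sub_self]
    rw [hfG]
    exact hGp
  · intro hf
    refine ⟨hG hf, ?_⟩
    induction hf using Algebra.adjoin_induction with
    | mem f hf =>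
      obtain ⟨i, rfl⟩ := hf
      intro g A
      fin_cases i
      · exact trace_conj_SL3 g A
      · have : (g⁻¹ * A * g)⁻¹ = g⁻¹ * A⁻¹ * g := by group
        change trace ((g⁻¹ * A * g)⁻¹).val = trace (A⁻¹).val
        rw [this, trace_conj_SL3]
    | algebraMap c => intro g A; rfl
    | add f₁ f₂ _ _ h₁ h₂ => intro g A; simp [h₁ g A, h₂ g A]
    | mul f₁ f₂ _ _ h₁ h₂ => intro g A; simp [h₁ g A, h₂ g A]
end

section
/- Call a nonempty finite cyclic word in the two colors {white, black} (i.e., a nonempty list read cyclically) 'cyclically alternating' if every pair of cyclically consecutive letters consists of two distinct colors; otherwise call it non-alternating. For natural numbers a, b, c, the following are equivalent: (1) there exist a natural number g and a positive integer k with k = c + 1 − 2g, together with k nonempty cyclic words in {white, black}, none of which is cyclically alternating, whose total number of white letters is a and whose total number of black letters is b; (2) it is NOT the case that (a = 0 and b = 0), NOT the case that (a + b = 1 and c is odd), and NOT the case that (a = 1 and b = 1 and c is even). -/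
/-!
A surface with `k` boundary components has `k ≡ c + 1 (mod 2)` and carries at least `k` marked
points, one per component. For the obstructions: `k ≥ 1`, so `a + b ≥ 1`; for odd `c` the
number `k` is even, hence at least `2`, so `a + b ≥ 2`; and for even `c` with `a = b = 1` the
number `k` is odd and at most `2`, so there is a single word, which has one letter of each color
and alternates.

Conversely, `(a, b) ≠ (0, 0), (1, 1)` is realized by a single non-alternating word
(`exists_word`). This settles even `c` with `k = 1`. For odd `c` one takes `k = 2` and splits the
at least two letters over two words: by color if both colors occur, and otherwise by putting one
letter on a component of its own.
-/

/-- A nonempty list, read as a cyclic word in the two colors `Bool`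
(`false` = white, `true` = black), is cyclically alternating if every pair of
cyclically consecutive letters consists of two distinct colors. -/
def CyclicallyAlternating (l : List Bool) : Prop :=
  ∀ i : Fin l.length,
    l.get i ≠ l.get ⟨(i.val + 1) % l.length, Nat.mod_lt _ i.pos⟩

theorem not_cyclicallyAlternating_singleton (x : Bool) : ¬ CyclicallyAlternating [x] :=
  fun h => h ⟨0, by simp⟩ (by simp)

theorem not_cyclicallyAlternating_cons_cons (x : Bool) (l : List Bool) :
    ¬ CyclicallyAlternating (x :: x :: l) := by
  intro h
  exact h ⟨0, by simp⟩ (by simp)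

/-- Unless there are no letters or exactly one of each color, the letters can be
arranged into one non-alternating word: a lone letter is its own cyclic successor, and otherwise
some color occurs twice and its letters can be made adjacent. -/
theorem exists_word (a b : ℕ) (h0 : ¬ (a = 0 ∧ b = 0)) (h1 : ¬ (a = 1 ∧ b = 1)) :
    ∃ l : List Bool, (l ≠ [] ∧ ¬ CyclicallyAlternating l) ∧
      l.count false = a ∧ l.count true = b := by
  by_cases ha : 2 ≤ a
  · obtain ⟨n, rfl⟩ := Nat.exists_eq_add_of_le' ha
    exact ⟨false :: false :: (List.replicate n false ++ List.replicate b true),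
      ⟨by simp, not_cyclicallyAlternating_cons_cons _ _⟩,
      by simp [List.count_replicate], by simp [List.count_replicate]⟩
  by_cases hb : 2 ≤ b
  · obtain ⟨n, rfl⟩ := Nat.exists_eq_add_of_le' hb
    exact ⟨true :: true :: (List.replicate n true ++ List.replicate a false),
      ⟨by simp, not_cyclicallyAlternating_cons_cons _ _⟩,
      by simp [List.count_replicate], by simp [List.count_replicate]⟩
  have : (a = 1 ∧ b = 0) ∨ (a = 0 ∧ b = 1) := by omega
  rcases this with ⟨rfl, rfl⟩ | ⟨rfl, rfl⟩
  · exact ⟨[false], ⟨by simp, not_cyclicallyAlternating_singleton _⟩, by simp, by simp⟩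
  · exact ⟨[true], ⟨by simp, not_cyclicallyAlternating_singleton _⟩, by simp, by simp⟩

theorem cyclicallyAlternating_of_count_eq_one (l : List Bool) (hf : l.count false = 1)
    (ht : l.count true = 1) : CyclicallyAlternating l := by
  have hl : l.length = 2 := by
    rw [← List.count_false_add_count_true l, hf, ht]
  obtain ⟨x, y, rfl⟩ := List.length_eq_two.mp hl
  intro i
  fin_cases i <;> cases x <;> cases y <;> simp_all

/-- Any two or more letters can be distributed over two non-alternating words; unlike for a single
word, one letter of each color is no exception. -/
theorem exists_two_words (a b : ℕ) (h : 2 ≤ a + b) :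
    ∃ l m : List Bool, (l ≠ [] ∧ ¬ CyclicallyAlternating l) ∧
      (m ≠ [] ∧ ¬ CyclicallyAlternating m) ∧
      l.count false + m.count false = a ∧ l.count true + m.count true = b := by
  obtain ⟨a₁, b₁, a₂, b₂, rfl, rfl, h1, h2, h3, h4⟩ : ∃ a₁ b₁ a₂ b₂ : ℕ,
      a₁ + a₂ = a ∧ b₁ + b₂ = b ∧ ¬ (a₁ = 0 ∧ b₁ = 0) ∧ ¬ (a₁ = 1 ∧ b₁ = 1) ∧
      ¬ (a₂ = 0 ∧ b₂ = 0) ∧ ¬ (a₂ = 1 ∧ b₂ = 1) := by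
    by_cases ha : a = 0
    · exact ⟨0, 1, 0, b - 1, by omega⟩
    by_cases hb : b = 0
    · exact ⟨1, 0, a - 1, 0, by omega⟩
    exact ⟨a, 0, 0, b, by omega⟩
  obtain ⟨l, hl, hlf, hlt⟩ := exists_word a₁ b₁ h1 h2
  obtain ⟨m, hm, hmf, hmt⟩ := exists_word a₂ b₂ h3 h4
  exact ⟨l, m, hl, hm, by omega, by omega⟩

theorem marked_surface_existence (a b c : ℕ) :
    (∃ (g : ℕ) (k : ℕ), 0 < k ∧ k + 2 * g = c + 1 ∧
      ∃ words : Fin k → List Bool,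
        (∀ i, words i ≠ [] ∧ ¬ CyclicallyAlternating (words i)) ∧
        (∑ i, (words i).count false) = a ∧
        (∑ i, (words i).count true) = b) ↔
    (¬ (a = 0 ∧ b = 0) ∧ ¬ (a + b = 1 ∧ Odd c) ∧ ¬ (a = 1 ∧ b = 1 ∧ Even c)) := by
  constructor
  · rintro ⟨g, k, hk, hg, w, hw, ha, hb⟩
    have hkab : k ≤ a + b := by
      have hsum : ∑ _i : Fin k, 1 ≤ ∑ i, ((w i).count false + (w i).count true) := by
        refine Finset.sum_le_sum fun i _ => ?_
        rw [List.count_false_add_count_true]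
        exact List.length_pos_iff.mpr (hw i).1
      rw [Finset.sum_add_distrib, ha, hb] at hsum
      simpa using hsum
    refine ⟨by omega, ?_, ?_⟩
    · rintro ⟨hab, d, hd⟩
      omega
    · rintro ⟨rfl, rfl, d, hd⟩
      obtain rfl : k = 1 := by omega
      rw [Fin.sum_univ_one] at ha hb
      exact (hw 0).2 (cyclicallyAlternating_of_count_eq_one _ ha hb)
  · rintro ⟨h0, h1, h2⟩
    rcases Nat.even_or_odd c with hc | hc
    · obtain ⟨l, hl, hf, ht⟩ := exists_word a b h0 fun h => h2 ⟨h.1, h.2, hc⟩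
      obtain ⟨d, hd⟩ := hc
      exact ⟨d, 1, by omega, by omega, fun _ => l, fun _ => hl, by simpa using hf,
        by simpa using ht⟩
    · have hab : 2 ≤ a + b := by
        have : a + b ≠ 1 := fun h => h1 ⟨h, hc⟩
        omega
      obtain ⟨l, m, hl, hm, hf, ht⟩ := exists_two_words a b hab
      obtain ⟨d, hd⟩ := hc
      refine ⟨d, 2, by omega, by omega, ![l, m], ?_, by simpa using hf, by simpa using ht⟩
      intro i
      fin_cases i
      · exact hl
      · exact hm
end

section
/- For any six vectors a, a', b, b', c, c' in ℂ³, the following identity holds: det(a,b,c) · det(a×a', b×b', c×c') = det(a,a',c)·det(c,c',b)·det(b,b',a) + det(b,b',c)·det(c,c',a)·det(a,a',b). -/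
/-- Determinant of the 3×3 matrix with rows `u`, `v`, `w`. -/
noncomputable def det3 (u v w : Fin 3 → ℂ) : ℂ :=
  Matrix.det (Matrix.of ![u, v, w])

theorem triangle_three_term_relation (a a' b b' c c' : Fin 3 → ℂ) :
    det3 a b c * det3 (crossProduct a a') (crossProduct b b') (crossProduct c c') =
      det3 a a' c * det3 c c' b * det3 b b' a
        + det3 b b' c * det3 c c' a * det3 a a' b := by
  -- The left side is `det (M * Nᵀ)`, where `M` has rows `a, b, c` and `N` has rows
  -- `a × a'`, `b × b'`, `c × c'`. The entries of `M * Nᵀ` are `u ⬝ᵥ (v × v') = det (v, v', u)`,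
  -- so its diagonal vanishes and only the two 3-cycles contribute to the determinant.
  have key : Matrix.of ![a, b, c] *
      (Matrix.of ![crossProduct a a', crossProduct b b', crossProduct c c']).transpose =
      !![0, det3 b b' a, det3 c c' a;
         det3 a a' b, 0, det3 c c' b;
         det3 a a' c, det3 b b' c, 0] := by
    ext i j
    fin_cases i <;> fin_cases j <;>
      simp [Matrix.mul_apply, Fin.sum_univ_three, det3, Matrix.det_fin_three, cross_apply] <;> ring
  have h := congrArg Matrix.det key
  rw [Matrix.det_mul, Matrix.det_transpose, Matrix.det_fin_three !![_, _, _; _, _, _; _, _, _]] at h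
  change det3 a b c * det3 _ _ _ = _ at h
  rw [h]
  simp
  ring
end

section
/- For any six vectors a, b, b', c, c', d in ℂ³, the following identity holds: det(c,c',a) · det(b,b',d) = det(c,c',d)·det(b,b',a) + det(c×c', b×b', a×d). -/
theorem three_term_exchange_relation_3 (a b b' c c' d : Fin 3 → ℂ) :
    det3 c c' a * det3 b b' d =
      det3 c c' d * det3 b b' a
        + det3 (crossProduct c c') (crossProduct b b') (crossProduct a d) := by
  -- With `n = c × c'` and `m = b × b'` this is the Binet–Cauchy identity
  -- `(n × m) ⬝ (a × d) = (n ⬝ a) (m ⬝ d) - (n ⬝ d) (m ⬝ a)`; it is checked in coordinates.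
  simp only [det3, Matrix.det_fin_three, cross_apply, Matrix.of_apply, Matrix.cons_val]
  ring
end

section
/- For any seven vectors a, a', b, b', c, c', d in ℂ³, the following identity holds: det(c,c',a) · det(a×a', b×b', c×d) = det(b,b',a)·det(a,a',c)·det(c,c',d) + det(a,c,d)·det(a×a', b×b', c×c'). -/
theorem det3_cross (a a' b b' u v : Fin 3 → ℂ) :
    det3 (crossProduct a a') (crossProduct b b') (crossProduct u v) =
      det3 b b' a * det3 a' u v - det3 b b' a' * det3 a u v := by
  simp [det3, Matrix.det_fin_three, cross_apply]
  ring

/-- The three-term Plücker relation for the vectors `a, a', c', d` modulo the common vector `c`. -/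
theorem det3_plucker (a a' c c' d : Fin 3 → ℂ) :
    det3 c c' a * det3 a' c d - det3 a c d * det3 a' c c' = det3 a a' c * det3 c c' d := by
  simp [det3, Matrix.det_fin_three]
  ring

theorem det3_rotate (u v w : Fin 3 → ℂ) : det3 u v w = det3 v w u := by
  simp [det3, Matrix.det_fin_three]
  ring

theorem three_term_exchange_relation_4 (a a' b b' c c' d : Fin 3 → ℂ) :
    det3 c c' a * det3 (crossProduct a a') (crossProduct b b') (crossProduct c d) =
      det3 b b' a * det3 a a' c * det3 c c' d
        + det3 a c d * det3 (crossProduct a a') (crossProduct b b') (crossProduct c c') := by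
  rw [det3_cross, det3_cross, det3_rotate a c c']
  linear_combination det3 b b' a * det3_plucker a a' c c' d
end
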